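/- arXiv:2502.05683 — 2 statements merged into one kernel-verified Lean document; each statement's English description precedes it below -/
import Mathlib

section
/- Let u : ℝ^n → ℝ be C^{1,1} with 1-Lipschitz derivative, and suppose x, y, z ∈ ℝ^n satisfy u(y) + ⟨Du(y), z−y⟩ − u(x) − ⟨Du(x), z−x⟩ = (1/2)(‖y−z‖² + ‖x−z‖²). Then ‖Du(y) − Du(z)‖ = ‖y−z‖ and ‖Du(x) − Du(z)‖ = ‖x−z‖; more specifically, u(y) + ⟨Du(y), z−y⟩ − u(z) = (1/2)‖y−z‖² and −u(x) − ⟨Du(x), z−x⟩ + u(z) = (1/2)‖x−z‖². -/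
open MeasureTheory RealInnerProductSpace Set

noncomputable section

/-- Euclidean space ℝ^n. -/
abbrev En (n : ℕ) := EuclideanSpace ℝ (Fin n)

/-!
Since `Du` is `K`-Lipschitz, `u` differs from its first-order Taylor polynomial at `y` by at most
`(K / 2) * ‖w - y‖ ^ 2`. The hypothesis is the equality case in the sum of this estimate at `y`
(from below) and at `x` (from above), evaluated at `z`, so each of the two estimates is an equality.
Hence `w ↦ u w - u y - ⟪Du y, w - y⟫ + (K / 2) * ‖w - y‖ ^ 2` attains its minimum `0` at `z`, and
its gradient vanishes there: `Du z - Du y = -K • (z - y)`. At `x` a maximum gives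
`Du z - Du x = K • (z - x)`.
-/

section Taylor

variable {E G : Type*} [NormedAddCommGroup E] [NormedSpace ℝ E] [NormedAddCommGroup G]
  [NormedSpace ℝ G]

theorem norm_image_sub_le_of_norm_deriv_le_mul_sub {g g' : ℝ → G} {a b C : ℝ}
    (hg : ∀ t ∈ Icc a b, HasDerivWithinAt g (g' t) (Icc a b) t)
    (bound : ∀ t ∈ Ico a b, ‖g' t‖ ≤ C * (t - a)) {t : ℝ} (ht : t ∈ Icc a b) :
    ‖g t - g a‖ ≤ C / 2 * (t - a) ^ 2 := by
  have hquad : ∀ t : ℝ, HasDerivAt (fun t => C / 2 * (t - a) ^ 2) (C * (t - a)) t := fun t =>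
    ((((hasDerivAt_id t).sub_const a).pow 2).const_mul (C / 2)).congr_deriv
      (by simp only [id_eq]; ring)
  exact image_norm_le_of_norm_deriv_right_le_deriv_boundary
    (fun t ht => ((hg t ht).sub_const (g a)).continuousWithinAt)
    (fun t ht => ((hg t (Ico_subset_Icc_self ht)).sub_const (g a)).mono_of_mem_nhdsWithin
      (Icc_mem_nhdsGE_of_mem ht))
    (by simp) hquad bound ht

theorem norm_image_sub_sub_le_of_hasFDerivWithin_lipschitzOnWith {f : E → G} {f' : E → E →L[ℝ] G}
    {s : Set E} {K : NNReal} (hs : Convex ℝ s) (hf : ∀ x ∈ s, HasFDerivWithinAt f (f' x) s x)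
    (hf' : LipschitzOnWith K f' s) {x y : E} (hx : x ∈ s) (hy : y ∈ s) :
    ‖f y - f x - f' x (y - x)‖ ≤ K / 2 * ‖y - x‖ ^ 2 := by
  let γ : ℝ → E := AffineMap.lineMap x y
  have hγ : MapsTo γ (Icc 0 1) s := fun t ht => hs.lineMap_mem hx hy ht
  have hderiv : ∀ t ∈ Icc (0 : ℝ) 1, HasDerivWithinAt (fun t => f (γ t) - t • f' x (y - x))
      ((f' (γ t) - f' x) (y - x)) (Icc 0 1) t := fun t ht =>
    (((hf (γ t) (hγ ht)).comp_hasDerivWithinAt t AffineMap.hasDerivWithinAt_lineMap hγ).sub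
      ((hasDerivWithinAt_id t _).smul_const (f' x (y - x)))).congr_deriv (by simp)
  have hbound : ∀ t ∈ Ico (0 : ℝ) 1,
      ‖(f' (γ t) - f' x) (y - x)‖ ≤ K * ‖y - x‖ ^ 2 * (t - 0) := fun t ht =>
    calc ‖(f' (γ t) - f' x) (y - x)‖
        ≤ ‖f' (γ t) - f' x‖ * ‖y - x‖ := (f' (γ t) - f' x).le_opNorm (y - x)
      _ ≤ K * ‖γ t - x‖ * ‖y - x‖ := by
        gcongr
        exact hf'.norm_sub_le (hγ (Ico_subset_Icc_self ht)) hx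
      _ = K * ‖y - x‖ ^ 2 * (t - 0) := by
        rw [← dist_eq_norm (γ t), dist_lineMap_left, Real.norm_of_nonneg ht.1, dist_comm x,
          dist_eq_norm]
        ring
  calc ‖f y - f x - f' x (y - x)‖
      = ‖f (γ 1) - (1 : ℝ) • f' x (y - x) - (f (γ 0) - (0 : ℝ) • f' x (y - x))‖ := by
        simp only [γ, AffineMap.lineMap_apply_one, AffineMap.lineMap_apply_zero, one_smul,
          zero_smul, sub_zero, sub_right_comm]
    _ ≤ K * ‖y - x‖ ^ 2 / 2 * (1 - 0) ^ 2 :=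
        norm_image_sub_le_of_norm_deriv_le_mul_sub hderiv hbound (right_mem_Icc.2 zero_le_one)
    _ = K / 2 * ‖y - x‖ ^ 2 := by ring

end Taylor

section Gradient

variable {F : Type*} [NormedAddCommGroup F] [InnerProductSpace ℝ F] [CompleteSpace F]
  {u : F → ℝ} {K : NNReal} {x y z : F}

theorem lipschitzWith_fderiv_of_lipschitzWith_gradient (hlip : LipschitzWith K (gradient u)) :
    LipschitzWith K (fderiv ℝ u) := by
  rw [← toDual_comp_gradient]
  simpa only [one_mul] using (InnerProductSpace.toDual ℝ F).lipschitz.comp hlip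

theorem abs_sub_sub_inner_gradient_le (hdiff : Differentiable ℝ u)
    (hlip : LipschitzWith K (gradient u)) (y w : F) :
    |u w - u y - ⟪gradient u y, w - y⟫| ≤ K / 2 * ‖w - y‖ ^ 2 := by
  rw [inner_gradient_left]
  exact norm_image_sub_sub_le_of_hasFDerivWithin_lipschitzOnWith convex_univ
    (fun w _ => (hdiff w).hasFDerivAt.hasFDerivWithinAt)
    (lipschitzWith_fderiv_of_lipschitzWith_gradient hlip).lipschitzOnWith (mem_univ y) (mem_univ w)

theorem hasGradientAt_sub_inner_sub_norm_sq {p : F} (hu : HasGradientAt u p z) (q y : F)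
    (a c : ℝ) :
    HasGradientAt (fun w => u w - a - ⟪q, w - y⟫ - c / 2 * ‖w - y‖ ^ 2)
      (p - q - c • (z - y)) z := by
  have hsub : HasFDerivAt (fun w => w - y) (ContinuousLinearMap.id ℝ F) z :=
    (hasFDerivAt_id z).sub_const y
  have hinner : HasFDerivAt (fun w => ⟪q, w - y⟫) (innerSL ℝ q) z :=
    (innerSL ℝ q).hasFDerivAt.comp z hsub
  refine (((hu.hasFDerivAt.sub_const a).sub hinner).sub
    (hsub.norm_sq.const_mul (c / 2))).congr_fderiv ?_
  ext v
  simp only [map_sub, map_smul, ContinuousLinearMap.comp_id, sub_apply, smul_apply,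
    InnerProductSpace.toDual_apply_apply, coe_innerSL_apply, nsmul_eq_mul, Nat.cast_ofNat,
    smul_eq_mul, sub_right_inj]
  ring

theorem eq_add_smul_of_isLocalExtr_sub_quadratic {p q : F} {a c : ℝ} (hu : HasGradientAt u p z)
    (hz : IsLocalExtr (fun w => u w - a - ⟪q, w - y⟫ - c / 2 * ‖w - y‖ ^ 2) z) :
    p = q + c • (z - y) := by
  have hzero := hz.hasFDerivAt_eq_zero (hasGradientAt_sub_inner_sub_norm_sq hu q y a c).hasFDerivAt
  rw [map_eq_zero_iff _ (InnerProductSpace.toDual ℝ F).injective, sub_sub] at hzero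
  exact sub_eq_zero.1 hzero

theorem gradient_eq_add_smul_of_sub_sub_inner_eq (hdiff : Differentiable ℝ u)
    (hlip : LipschitzWith K (gradient u)) {c : ℝ} (hc : K ≤ |c|)
    (h : u z - u y - ⟪gradient u y, z - y⟫ = c / 2 * ‖z - y‖ ^ 2) :
    gradient u z = gradient u y + c • (z - y) := by
  refine eq_add_smul_of_isLocalExtr_sub_quadratic (a := u y) (hdiff z).hasGradientAt ?_
  have htaylor := fun w => abs_le.1 (abs_sub_sub_inner_gradient_le hdiff hlip y w)
  rcases le_abs.1 hc with hc | hc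
  · refine Or.inr (Filter.Eventually.of_forall fun w => ?_)
    have : K / 2 * ‖w - y‖ ^ 2 ≤ c / 2 * ‖w - y‖ ^ 2 := by gcongr
    linarith [(htaylor w).2]
  · refine Or.inl (Filter.Eventually.of_forall fun w => ?_)
    have : K / 2 * ‖w - y‖ ^ 2 ≤ -c / 2 * ‖w - y‖ ^ 2 := by gcongr
    linarith [(htaylor w).1]

theorem norm_gradient_sub_eq_of_sub_sub_inner_eq (hdiff : Differentiable ℝ u)
    (hlip : LipschitzWith K (gradient u)) {c : ℝ} (hc : |c| = K)
    (h : u z - u y - ⟪gradient u y, z - y⟫ = c / 2 * ‖z - y‖ ^ 2) :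
    ‖gradient u y - gradient u z‖ = K * ‖y - z‖ := by
  rw [gradient_eq_add_smul_of_sub_sub_inner_eq hdiff hlip hc.ge h, sub_add_cancel_left, norm_neg,
    norm_smul, Real.norm_eq_abs, hc, norm_sub_rev]

theorem stmt0_general (hdiff : Differentiable ℝ u) (hlip : LipschitzWith K (gradient u))
    (h : u y + ⟪gradient u y, z - y⟫ - u x - ⟪gradient u x, z - x⟫
      = K / 2 * (‖y - z‖ ^ 2 + ‖x - z‖ ^ 2)) :
    ‖gradient u y - gradient u z‖ = K * ‖y - z‖ ∧
    ‖gradient u x - gradient u z‖ = K * ‖x - z‖ ∧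
    u y + ⟪gradient u y, z - y⟫ - u z = K / 2 * ‖y - z‖ ^ 2 ∧
    -u x - ⟪gradient u x, z - x⟫ + u z = K / 2 * ‖x - z‖ ^ 2 := by
  rw [norm_sub_rev y z, norm_sub_rev x z] at h
  have hlower := (abs_le.1 (abs_sub_sub_inner_gradient_le hdiff hlip y z)).1
  have hupper := (abs_le.1 (abs_sub_sub_inner_gradient_le hdiff hlip x z)).2
  have hy : u z - u y - ⟪gradient u y, z - y⟫ = -K / 2 * ‖z - y‖ ^ 2 := by linarith
  have hx : u z - u x - ⟪gradient u x, z - x⟫ = K / 2 * ‖z - x‖ ^ 2 := by linarith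
  refine ⟨norm_gradient_sub_eq_of_sub_sub_inner_eq hdiff hlip (by rw [abs_neg, NNReal.abs_eq]) hy,
    norm_gradient_sub_eq_of_sub_sub_inner_eq hdiff hlip K.abs_eq hx, ?_, ?_⟩
  · rw [norm_sub_rev]
    linarith
  · rw [norm_sub_rev]
    linarith

end Gradient

/-- if `u` is `C^{1,1}` with 1-Lipschitz derivative (gradient) and
`u(y) + ⟨Du(y), z−y⟩ − u(x) − ⟨Du(x), z−x⟩ = (1/2)(‖y−z‖² + ‖x−z‖²)`, then
`‖Du(y) − Du(z)‖ = ‖y−z‖`, `‖Du(x) − Du(z)‖ = ‖x−z‖`, and moreover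
`u(y) + ⟨Du(y), z−y⟩ − u(z) = (1/2)‖y−z‖²` and `−u(x) − ⟨Du(x), z−x⟩ + u(z) = (1/2)‖x−z‖²`. -/
theorem stmt0 {n : ℕ} (u : En n → ℝ) (hdiff : Differentiable ℝ u)
    (hlip : LipschitzWith 1 (gradient u)) (x y z : En n)
    (h : u y + ⟪gradient u y, z - y⟫ - u x - ⟪gradient u x, z - x⟫
      = (1/2) * (‖y - z‖^2 + ‖x - z‖^2)) :
    ‖gradient u y - gradient u z‖ = ‖y - z‖ ∧
    ‖gradient u x - gradient u z‖ = ‖x - z‖ ∧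
    u y + ⟪gradient u y, z - y⟫ - u z = (1/2) * ‖y - z‖^2 ∧
    -u x - ⟪gradient u x, z - x⟫ + u z = (1/2) * ‖x - z‖^2 := by
  simpa only [NNReal.coe_one, one_mul] using
    stmt0_general hdiff hlip (by simpa only [NNReal.coe_one] using h)
end
end

section
/- Let V₁, V₂ ⊆ ℝ^n be orthogonal, mutually complementing linear subspaces and let f : ℝ^n → ℝ be differentiable with Lipschitz gradient Df. Then (by Rademacher's theorem Df is differentiable Lebesgue-almost everywhere; denote by D²f(x) its derivative where it exists) f is convex-concave with respect to V₁, V₂ if and only if for Lebesgue-almost every x ∈ ℝ^n one has ⟨D²f(x)w, w⟩ ≥ 0 for all w ∈ V₁ and ⟨D²f(x)w, w⟩ ≤ 0 for all w ∈ V₂. -/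
open MeasureTheory RealInnerProductSpace Set

noncomputable section

/-- `f` is convex-concave with respect to `V₁, V₂`: for each `v₁ ∈ V₁` the map
`v₂ ↦ f(v₁+v₂)` is concave on `V₂`, and for each `v₂ ∈ V₂` the map `v₁ ↦ f(v₁+v₂)`
is convex on `V₁`. -/
def ConvexConcave {n : ℕ} (V₁ V₂ : Submodule ℝ (En n)) (f : En n → ℝ) : Prop :=
  (∀ v₁ ∈ V₁, ConcaveOn ℝ Set.univ (fun v₂ : V₂ => f (v₁ + v₂))) ∧
  (∀ v₂ ∈ V₂, ConvexOn ℝ Set.univ (fun v₁ : V₁ => f (v₁ + v₂)))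

/-!
Differentiating along lines, `f` is convex in the direction `w` iff `t ↦ ⟪∇f (x + t • w), w⟫` is
monotone for every `x`, and at points of differentiability its derivative is `⟪D²f w, w⟫`.
Conversely, if `⟪D²f w, w⟫ ≥ 0` almost everywhere, then by Fubini the derivative of this function is
nonnegative almost everywhere on almost every line. Being Lipschitz, the function is then monotone
on almost every line, hence on every line by continuity. Since `V₁ + V₂` is the whole space, the
lines with direction in `V₁` are exactly those contained in a translate of `V₁` by an element of
`V₂`, and symmetrically for `V₂`. The concave half is the convex half applied to `-f`.
-/

section Measure

theorem ae_ae_add_comp {G T : Type*} [AddGroup G] [MeasurableSpace G] [MeasurableAdd₂ G]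
    [MeasurableSpace T] {μ : Measure G} [SFinite μ] [μ.IsAddRightInvariant] {ν : Measure T}
    [SFinite ν] {γ : T → G} (hγ : Measurable γ) {p : G → Prop} (hp : ∀ᵐ x ∂μ, p x) :
    ∀ᵐ x ∂μ, ∀ᵐ t ∂ν, p (x + γ t) := by
  have hadd : Measure.QuasiMeasurePreserving (fun z : G × T => z.1 + γ z.2) (μ.prod ν) μ :=
    QuasiMeasurePreserving.prod_of_left (by fun_prop) <| .of_forall fun t =>
      (measurePreserving_add_right μ (γ t)).quasiMeasurePreserving
  exact Measure.ae_ae_of_ae_prod (hadd.ae hp)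

theorem le_of_ae_le_of_continuous {X Y : Type*} [TopologicalSpace X] [MeasurableSpace X]
    {μ : Measure X} [μ.IsOpenPosMeasure] [TopologicalSpace Y] [Preorder Y] [OrderClosedTopology Y]
    {g h : X → Y} (hg : Continuous g) (hh : Continuous h) (hle : g ≤ᵐ[μ] h) : g ≤ h :=
  fun x => (isClosed_le hg hh).closure_subset (Measure.dense_of_ae hle x)

theorem monotone_of_ae_deriv_nonneg {φ : ℝ → ℝ}
    (hφ : ∀ a b, AbsolutelyContinuousOnInterval φ a b) (hderiv : ∀ᵐ t, 0 ≤ deriv φ t) :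
    Monotone φ := by
  intro a b hab
  rw [← sub_nonneg, ← (hφ a b).integral_deriv_eq_sub]
  exact intervalIntegral.integral_nonneg_of_ae hab hderiv

end Measure

section Lines

theorem deriv_comp_add_smul_eq_lineDeriv {𝕜 E F : Type*} [NontriviallyNormedField 𝕜]
    [AddCommGroup E] [Module 𝕜 E] [NormedAddCommGroup F] [NormedSpace 𝕜 F] (f : E → F) (x w : E)
    (t : 𝕜) : deriv (fun s : 𝕜 => f (x + s • w)) t = lineDeriv 𝕜 f (x + t • w) w := by
  simpa only [lineDeriv, add_assoc, ← add_smul, add_zero] using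
    (deriv_comp_const_add (fun s : 𝕜 => f (x + s • w)) t 0).symm

theorem lineDeriv_inner_const {E F : Type*} [NormedAddCommGroup E] [NormedSpace ℝ E]
    [NormedAddCommGroup F] [InnerProductSpace ℝ F] {g : E → F} {x : E}
    (hg : DifferentiableAt ℝ g x) (v : E) (w : F) :
    lineDeriv ℝ (fun y => ⟪g y, w⟫) x v = ⟪fderiv ℝ g x v, w⟫ := by
  have hw : DifferentiableAt ℝ (fun _ : E => w) x := differentiableAt_const w
  rw [(hg.inner ℝ hw).lineDeriv_eq_fderiv, fderiv_inner_apply ℝ hg hw]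
  simp

theorem lipschitzWith_inner_const {X F : Type*} [PseudoEMetricSpace X] [SeminormedAddCommGroup F]
    [InnerProductSpace ℝ F] {K : NNReal} {g : X → F} (hg : LipschitzWith K g) (w : F) :
    LipschitzWith (‖innerSL ℝ w‖₊ * K) fun x => ⟪g x, w⟫ := by
  simpa only [Function.comp_def, innerSL_apply_apply, real_inner_comm] using
    (innerSL ℝ w).lipschitz.comp hg

theorem lipschitzWith_comp_add_smul {E Y : Type*} [SeminormedAddCommGroup E] [NormedSpace ℝ E]
    [PseudoEMetricSpace Y] {K : NNReal} {h : E → Y} (hh : LipschitzWith K h) (x w : E) :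
    LipschitzWith (K * ‖w‖₊) fun t : ℝ => h (x + t • w) := by
  simpa [Function.comp_def, AffineMap.lineMap_apply, add_comm, nndist_eq_nnnorm] using
    hh.comp (lipschitzWith_lineMap (𝕜 := ℝ) x (x + w))

theorem monotone_comp_add_smul_of_ae_lineDeriv_nonneg {E : Type*} [NormedAddCommGroup E]
    [NormedSpace ℝ E] [FiniteDimensional ℝ E] [MeasurableSpace E] [BorelSpace E] {μ : Measure E}
    [μ.IsAddHaarMeasure] {K : NNReal} {h : E → ℝ} {w : E} (hh : LipschitzWith K h)
    (hderiv : ∀ᵐ x ∂μ, 0 ≤ lineDeriv ℝ h x w) (x : E) : Monotone fun t : ℝ => h (x + t • w) := by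
  have hline : Measurable fun t : ℝ => t • w := by fun_prop
  have hmono : ∀ᵐ y ∂μ, Monotone fun t : ℝ => h (y + t • w) := by
    filter_upwards [ae_ae_add_comp (ν := volume) hline hderiv] with y hy
    refine monotone_of_ae_deriv_nonneg (fun a b => ?_) ?_
    · exact (lipschitzWith_comp_add_smul hh y w).lipschitzOnWith.absolutelyContinuousOnInterval
    · simpa only [deriv_comp_add_smul_eq_lineDeriv] using hy
  have hcont (t : ℝ) : Continuous fun y => h (y + t • w) := hh.continuous.comp (by fun_prop)
  intro a b hab
  exact le_of_ae_le_of_continuous (hcont a) (hcont b) (hmono.mono fun y hy => hy hab) x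

end Lines

section Convexity

theorem convexOn_univ_iff_forall_add_smul {E : Type*} [AddCommGroup E] [Module ℝ E] {f : E → ℝ} :
    ConvexOn ℝ univ f ↔ ∀ x w, ConvexOn ℝ univ fun t : ℝ => f (x + t • w) := by
  constructor
  · intro hf x w
    simpa [Function.comp_def, AffineMap.lineMap_apply, add_comm] using
      hf.comp_affineMap (AffineMap.lineMap x (x + w))
  · intro hf
    refine ⟨convex_univ, fun x _ y _ a b ha hb hab => ?_⟩
    have hline := (hf x (y - x)).2 (mem_univ 0) (mem_univ 1) ha hb hab
    have hcombo : x + b • (y - x) = a • x + b • y := by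
      obtain rfl := eq_sub_of_add_eq hab
      module
    simpa [hcombo] using hline

theorem forall_convexOn_fiber_iff_forall_add_smul {E : Type*} [AddCommGroup E] [Module ℝ E]
    {V W : Submodule ℝ E} (hVW : V ⊔ W = ⊤) {f : E → ℝ} :
    (∀ w ∈ W, ConvexOn ℝ univ fun v : V => f (v + w)) ↔
      ∀ x, ∀ v ∈ V, ConvexOn ℝ univ fun t : ℝ => f (x + t • v) := by
  simp_rw [convexOn_univ_iff_forall_add_smul (E := V), Submodule.coe_add, Submodule.coe_smul,
    add_right_comm _ _ (_ : E)]
  constructor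
  · intro hfiber x v hv
    obtain ⟨a, ha, w, hw, rfl⟩ := Submodule.mem_sup.1 (hVW ▸ Submodule.mem_top : x ∈ V ⊔ W)
    exact hfiber w hw ⟨a, ha⟩ ⟨v, hv⟩
  · intro hline w _ a v
    exact hline (a + w) v v.2

theorem convexOn_comp_add_smul_iff_monotone_fderiv {E : Type*} [NormedAddCommGroup E]
    [NormedSpace ℝ E] {f : E → ℝ} (hf : Differentiable ℝ f) (x w : E) :
    ConvexOn ℝ univ (fun t : ℝ => f (x + t • w)) ↔
      Monotone fun t : ℝ => fderiv ℝ f (x + t • w) w := by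
  have hline : Differentiable ℝ fun t : ℝ => f (x + t • w) := hf.fun_comp (by fun_prop)
  have hderiv : deriv (fun t : ℝ => f (x + t • w)) = fun t => fderiv ℝ f (x + t • w) w :=
    funext fun t => (hf (x + t • w)).deriv_comp_add_smul
  rw [← hderiv]
  exact ⟨fun hconv => monotoneOn_univ.1 (hconv.monotoneOn_deriv fun t _ => hline t),
    fun hmono => hmono.convexOn_univ_of_deriv hline⟩

end Convexity

section Hessian

theorem gradient_neg {𝕜 E : Type*} [RCLike 𝕜] [NormedAddCommGroup E] [InnerProductSpace 𝕜 E]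
    [CompleteSpace E] (f : E → 𝕜) : gradient (-f) = -gradient f := by
  funext x
  simp [gradient, fderiv_neg]

variable {E : Type*} [NormedAddCommGroup E] [InnerProductSpace ℝ E] [FiniteDimensional ℝ E]
  [MeasurableSpace E] [BorelSpace E] {μ : Measure E} [μ.IsAddHaarMeasure] {f : E → ℝ} {K : NNReal}

theorem forall_convexOn_add_smul_iff_ae_inner_fderiv_gradient_nonneg (hf : Differentiable ℝ f)
    (hlip : LipschitzWith K (gradient f)) (S : Set E) :
    (∀ x, ∀ w ∈ S, ConvexOn ℝ univ fun t : ℝ => f (x + t • w)) ↔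
      ∀ᵐ x ∂μ, ∀ w ∈ S, 0 ≤ ⟪fderiv ℝ (gradient f) x w, w⟫ := by
  have hdiff : ∀ᵐ x ∂μ, DifferentiableAt ℝ (gradient f) x := hlip.ae_differentiableAt
  simp_rw [convexOn_comp_add_smul_iff_monotone_fderiv hf, ← inner_gradient_left]
  constructor
  · intro hmono
    filter_upwards [hdiff] with x hx w hw
    rw [← lineDeriv_inner_const hx]
    exact (hmono x w hw).deriv_nonneg
  · intro hnonneg x w hw
    refine monotone_comp_add_smul_of_ae_lineDeriv_nonneg (μ := μ)
      (lipschitzWith_inner_const hlip w) ?_ x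
    filter_upwards [hdiff, hnonneg] with y hy hy_nonneg
    rw [lineDeriv_inner_const hy]
    exact hy_nonneg w hw

theorem forall_convexOn_fiber_iff_ae_inner_fderiv_gradient_nonneg {V W : Submodule ℝ E}
    (hVW : V ⊔ W = ⊤) (hf : Differentiable ℝ f) (hlip : LipschitzWith K (gradient f)) :
    (∀ w ∈ W, ConvexOn ℝ univ fun v : V => f (v + w)) ↔
      ∀ᵐ x ∂μ, ∀ v ∈ V, 0 ≤ ⟪fderiv ℝ (gradient f) x v, v⟫ :=
  (forall_convexOn_fiber_iff_forall_add_smul hVW).trans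
    (forall_convexOn_add_smul_iff_ae_inner_fderiv_gradient_nonneg hf hlip V)

theorem forall_concaveOn_fiber_iff_ae_inner_fderiv_gradient_nonpos {V W : Submodule ℝ E}
    (hVW : V ⊔ W = ⊤) (hf : Differentiable ℝ f) (hlip : LipschitzWith K (gradient f)) :
    (∀ w ∈ W, ConcaveOn ℝ univ fun v : V => f (v + w)) ↔
      ∀ᵐ x ∂μ, ∀ v ∈ V, ⟪fderiv ℝ (gradient f) x v, v⟫ ≤ 0 := by
  have hlip_neg : LipschitzWith K (gradient (-f)) := gradient_neg f ▸ hlip.neg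
  have hconvex := forall_convexOn_fiber_iff_ae_inner_fderiv_gradient_nonneg (μ := μ) hVW hf.neg
    hlip_neg
  simp_rw [gradient_neg, fderiv_neg, neg_apply, inner_neg_left,
    Left.nonneg_neg_iff] at hconvex
  simp_rw [← hconvex, ← neg_convexOn_iff]
  rfl

theorem stmt3_general {V₁ V₂ : Submodule ℝ E} (hV : V₁ ⊔ V₂ = ⊤) (hf : Differentiable ℝ f)
    (hlip : LipschitzWith K (gradient f)) :
    ((∀ v₁ ∈ V₁, ConcaveOn ℝ univ fun v₂ : V₂ => f (v₁ + v₂)) ∧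
        ∀ v₂ ∈ V₂, ConvexOn ℝ univ fun v₁ : V₁ => f (v₁ + v₂)) ↔
      ∀ᵐ x ∂μ, DifferentiableAt ℝ (gradient f) x ∧
        (∀ w ∈ V₁, 0 ≤ ⟪fderiv ℝ (gradient f) x w, w⟫) ∧
        (∀ w ∈ V₂, ⟪fderiv ℝ (gradient f) x w, w⟫ ≤ 0) := by
  have hdiff : ∀ᵐ x ∂μ, DifferentiableAt ℝ (gradient f) x := hlip.ae_differentiableAt
  have hconcave := forall_concaveOn_fiber_iff_ae_inner_fderiv_gradient_nonpos (μ := μ)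
    (sup_comm V₁ V₂ ▸ hV) hf hlip
  have hconvex := forall_convexOn_fiber_iff_ae_inner_fderiv_gradient_nonneg (μ := μ) hV hf hlip
  simp only [add_comm (_ : V₂).1] at hconcave
  rw [hconcave, hconvex, Filter.eventually_and, Filter.eventually_and, and_iff_right hdiff,
    and_comm]

end Hessian

/-- for `f` differentiable with Lipschitz gradient, `f` is convex-concave
with respect to orthogonal, mutually complementing subspaces `V₁, V₂` iff for
Lebesgue-a.e. `x` the second derivative `D²f(x)` (the derivative of the gradient,
which exists a.e. by Rademacher) is positive semidefinite on `V₁` and negative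
semidefinite on `V₂`. -/
theorem stmt3 {n : ℕ} (V₁ V₂ : Submodule ℝ (En n))
    (horth : V₁ ≤ V₂ᗮ) (hcompl : V₁ ⊔ V₂ = ⊤)
    (f : En n → ℝ) (hdiff : Differentiable ℝ f)
    (K : NNReal) (hlip : LipschitzWith K (gradient f)) :
    ConvexConcave V₁ V₂ f ↔
      ∀ᵐ x ∂(volume : Measure (En n)),
        DifferentiableAt ℝ (gradient f) x ∧
        (∀ w ∈ V₁, 0 ≤ ⟪fderiv ℝ (gradient f) x w, w⟫) ∧
        (∀ w ∈ V₂, ⟪fderiv ℝ (gradient f) x w, w⟫ ≤ 0) :=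
  stmt3_general hcompl hdiff hlip
end
end
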